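/- For every integer n ≥ 1, every t > 0, r ∈ [0, π/2) and φ ∈ (0, π/2], the subelliptic heat kernel on CP^{2n+1} admits the integral representation h_t(r, φ) = (e^{−t}/(2π√(πt)))·∫_0^π ∫_0^∞ (sinh y·sin(y·arccos(cos φ·cos θ)/(2t))/√(1 − cos²φ·cos²θ))·e^{−(y² − arccos(cos φ·cos θ)²)/(4t)}·q_t(cos r·cosh y) dy dθ. -/

import Mathlib

open Real MeasureTheory Filter Topology Set

noncomputable section

/-- The defining formula of the Jacobi polynomial `P_k^{(α,β)}` on `(-1,1)`. -/
def jacobiFormula (k α β : ℕ) (x : ℝ) : ℝ :=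
  ((-1 : ℝ) ^ k / (2 ^ k * Nat.factorial k)) * (1 - x) ^ (-(α : ℤ)) * (1 + x) ^ (-(β : ℤ)) *
    iteratedDeriv k (fun y => (1 - y) ^ (α + k) * (1 + y) ^ (β + k)) x

/-- `J k α β` is the Jacobi polynomial `P_k^{(α,β)}`: a polynomial function satisfying the
defining formula on `(-1,1)`. -/
def IsJacobi (J : ℕ → ℕ → ℕ → ℝ → ℝ) : Prop :=
  ∀ k α β : ℕ, (∃ p : Polynomial ℝ, ∀ x : ℝ, J k α β x = p.eval x) ∧
    ∀ x ∈ Set.Ioo (-1 : ℝ) 1, J k α β x = jacobiFormula k α β x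

/-- The vertical factor `sin((m+1)η)/sin η`, extended by its limit `m+1` at `η = 0`. -/
def vertFactor (m : ℕ) (η : ℝ) : ℝ :=
  if η = 0 then (m + 1 : ℝ) else Real.sin ((m + 1) * η) / Real.sin η

/-- The general term of the double series defining the subelliptic heat kernel of the
quaternionic Hopf fibration on `S^{4n+3}`. -/
def pTerm (n : ℕ) (J : ℕ → ℕ → ℕ → ℝ → ℝ) (t r η : ℝ) (mk : ℕ × ℕ) : ℝ :=
  (Real.Gamma (2 * n) / (2 * Real.pi ^ (2 * n + 2))) *
    (2 * (mk.2 : ℝ) + mk.1 + 2 * n + 1) * ((mk.1 : ℝ) + 1) *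
    (Nat.choose (mk.2 + mk.1 + 2 * n) (2 * n - 1) : ℝ) *
    Real.exp (-(4 * ((mk.2 : ℝ) * (mk.2 + 2 * n + mk.1 + 1) + n * mk.1)) * t) *
    vertFactor mk.1 η * Real.cos r ^ mk.1 * J mk.2 (2 * n - 1) (mk.1 + 1) (Real.cos (2 * r))

/-- The subelliptic heat kernel of the quaternionic Hopf fibration on `S^{4n+3}`. -/
def pKernel (n : ℕ) (J : ℕ → ℕ → ℕ → ℝ → ℝ) (t r η : ℝ) : ℝ :=
  ∑' mk : ℕ × ℕ, pTerm n J t r η mk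

/-- The defining formula of the Gegenbauer polynomial `C_m^{2n+1}` on `(-1,1)`. -/
def gegenbauerFormula (n m : ℕ) (x : ℝ) : ℝ :=
  ((-1 : ℝ) ^ m / 2 ^ m) *
    (Real.Gamma ((m : ℝ) + 4 * n + 2) * Real.Gamma (2 * (n : ℝ) + 3 / 2) /
      (Real.Gamma (4 * (n : ℝ) + 2) * Real.Gamma ((m : ℝ) + 1) *
        Real.Gamma (2 * (n : ℝ) + m + 3 / 2))) *
    (1 - x ^ 2) ^ (-(2 * (n : ℝ) + 1 / 2)) *
    iteratedDeriv m (fun y => (1 - y ^ 2) ^ (2 * (n : ℝ) + m + 1 / 2)) x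

/-- `C m` is the Gegenbauer polynomial `C_m^{2n+1}`. -/
def IsGegenbauer (n : ℕ) (C : ℕ → ℝ → ℝ) : Prop :=
  ∀ m : ℕ, (∃ p : Polynomial ℝ, ∀ x : ℝ, C m x = p.eval x) ∧
    ∀ x ∈ Set.Ioo (-1 : ℝ) 1, C m x = gegenbauerFormula n m x

/-- The Riemannian heat kernel of `S^{4n+3}`. -/
def qKernel (n : ℕ) (C : ℕ → ℝ → ℝ) (t x : ℝ) : ℝ :=
  (Real.Gamma (2 * n + 1) / (2 * Real.pi ^ (2 * n + 2))) *
    ∑' m : ℕ, ((m : ℝ) + 2 * n + 1) * Real.exp (-((m : ℝ) * (m + 4 * n + 2)) * t) * C m x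

/-- The general term of the double series defining the subelliptic heat kernel on `CP^{2n+1}`. -/
def hTerm (n : ℕ) (J : ℕ → ℕ → ℕ → ℝ → ℝ) (t r φ : ℝ) (mk : ℕ × ℕ) : ℝ :=
  (Real.Gamma (2 * n) / (4 * Real.pi ^ (2 * n + 2))) *
    (2 * (mk.2 : ℝ) + 2 * mk.1 + 2 * n + 1) * (2 * (mk.1 : ℝ) + 1) *
    (Nat.choose (mk.2 + 2 * mk.1 + 2 * n) (2 * n - 1) : ℝ) *
    Real.exp (-(4 * (mk.2 : ℝ) * (mk.2 + 2 * n + 2 * mk.1 + 1) + 8 * n * mk.1) * t) *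
    Real.cos r ^ (2 * mk.1) * J mk.1 0 0 (Real.cos (2 * φ)) *
    J mk.2 (2 * n - 1) (2 * mk.1 + 1) (Real.cos (2 * r))

/-- The subelliptic heat kernel of the fibration `CP^1 → CP^{2n+1} → HP^n`. -/
def hKernel (n : ℕ) (J : ℕ → ℕ → ℕ → ℝ → ℝ) (t r φ : ℝ) : ℝ :=
  ∑' mk : ℕ × ℕ, hTerm n J t r φ mk

end

/-!
By the connection formula between Gegenbauer polynomials, Jacobi polynomials and Chebyshev
polynomials of the second kind, `sinh y * q_t(cos r cosh y)` is a series in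
`e^{-m(m+2)t} sinh((m+1)y)` whose coefficients are the radial parts of the subelliptic heat kernel
`p_t(r, η)` of the quaternionic Hopf fibration `S³ → S^{4n+3} → HPⁿ`. Integrating termwise against
`sin(yη/2t) e^{-y²/4t}` turns `e^{-m(m+2)t} sinh((m+1)y)` into a multiple of `sin((m+1)η)`, the same
multiple for every `m`; this expresses `p_t` as an integral of `q_t`. Finally `h_t(r, φ)` is half
the average of `p_t(r, arccos(cos φ cos θ))` over `θ`: the mean of `U_m(cos φ cos θ)` over `[0, π]`
is `0` for odd `m` and the Legendre polynomial `P_l(cos 2φ)` for `m = 2l`.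
-/

section Polynomials

open scoped Polynomial Nat
open Finset (range)
open Polynomial (X C derivative)
open Polynomial.Chebyshev (U)
open Finset.HasAntidiagonal (antidiagonal)

/-! ### Jacobi polynomials -/

theorem cast_succ_mul_choose_succ (n q : ℕ) :
    ((q : ℝ) + 1) * (n.choose (q + 1) : ℝ) = ((n : ℝ) - q) * n.choose q := by
  have pascal : ((n + 1 : ℕ) : ℝ) * n.choose q = (n + 1).choose (q + 1) * ((q + 1 : ℕ) : ℝ) := by
    exact_mod_cast Nat.add_one_mul_choose_eq n q
  rw [Nat.choose_succ_succ] at pascal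
  push_cast at pascal
  linear_combination -pascal

theorem eval_eq_of_eqOn_Ioo {f : ℝ → ℝ} {p q : ℝ[X]} {a b : ℝ} (hab : a < b)
    (hp : ∀ x, f x = p.eval x) (hq : ∀ x ∈ Ioo a b, f x = q.eval x) (x : ℝ) :
    f x = q.eval x := by
  have hpq : p = q := Polynomial.eq_of_infinite_eval_eq p q <|
    (Ioo_infinite hab).mono fun y hy => (hp y).symm.trans (hq y hy)
  rw [hp, hpq]

/-- The coefficient of `X ^ q` in `shiftedJacobi k a b`; it vanishes for `q > k`. -/
def jacobiCoeff (k a b q : ℕ) : ℝ :=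
  (-1) ^ (k + q) * (k + b).choose (b + q) * (k + a + b + q).choose q

/-- The Jacobi polynomial `P_k^{(a,b)}` in the variable `X = (1 + x) / 2`, through its expansion at
the endpoint `x = -1`. -/
noncomputable def shiftedJacobi (k a b : ℕ) : ℝ[X] :=
  ∑ q ∈ range (k + 1), Polynomial.monomial q (jacobiCoeff k a b q)

theorem jacobiCoeff_eq_zero_of_lt {k q : ℕ} (hkq : k < q) (a b : ℕ) : jacobiCoeff k a b q = 0 := by
  rw [jacobiCoeff, Nat.choose_eq_zero_of_lt (by lia : k + b < b + q)]
  simp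

theorem coeff_shiftedJacobi (k a b q : ℕ) :
    (shiftedJacobi k a b).coeff q = jacobiCoeff k a b q := by
  rw [shiftedJacobi, Polynomial.finsetSum_coeff]
  simp only [Polynomial.coeff_monomial]
  rw [Finset.sum_ite_eq']
  split_ifs with hq
  · rfl
  · exact (jacobiCoeff_eq_zero_of_lt (by simpa using hq) a b).symm

theorem eval_shiftedJacobi (k a b : ℕ) (x : ℝ) :
    (shiftedJacobi k a b).eval x = ∑ q ∈ range (k + 1), jacobiCoeff k a b q * x ^ q := by
  simp [shiftedJacobi, Polynomial.eval_finsetSum]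

theorem jacobiCoeff_succ_zero (k a b : ℕ) :
    -((k : ℝ) + 1) * jacobiCoeff (k + 1) a b 0 = (b + 1) * jacobiCoeff k (a + 1) (b + 1) 0 := by
  have absorb := cast_succ_mul_choose_succ (k + 1 + b) b
  simp only [jacobiCoeff, add_zero, Nat.choose_zero_right, show k + (b + 1) = k + 1 + b by ring]
  push_cast at absorb ⊢
  linear_combination (-1 : ℝ) ^ (k + 1) * absorb

theorem jacobiCoeff_succ_succ (k a b q : ℕ) :
    -((k : ℝ) + 1) * jacobiCoeff (k + 1) a b (q + 1) =
      (q + b + 2) * jacobiCoeff k (a + 1) (b + 1) (q + 1) -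
        (q + a + b + 2) * jacobiCoeff k (a + 1) (b + 1) q := by
  have absorb₁ := cast_succ_mul_choose_succ (k + b + 1) (b + 1 + q)
  have absorb₂ := cast_succ_mul_choose_succ (k + a + b + 2 + q) q
  have pascal := Nat.choose_succ_succ (k + a + b + 2 + q) q
  simp only [jacobiCoeff, show k + 1 + b = k + b + 1 by ring, show k + (b + 1) = k + b + 1 by ring,
    show b + (q + 1) = b + 1 + q by ring, show b + 1 + (q + 1) = b + 1 + q + 1 by ring,
    show k + 1 + a + b + (q + 1) = k + a + b + 2 + q by ring,
    show k + (a + 1) + (b + 1) + (q + 1) = (k + a + b + 2 + q).succ by grind,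
    show k + (a + 1) + (b + 1) + q = k + a + b + 2 + q by ring, pascal]
  push_cast at absorb₁ absorb₂ ⊢
  linear_combination (-1 : ℝ) ^ (k + q) *
    (((k + a + b + 2 + q).choose q + (k + a + b + 2 + q).choose (q + 1)) * absorb₁ -
      (k + b + 1).choose (b + 1 + q) * absorb₂)

theorem shiftedJacobi_succ (k a b : ℕ) :
    C (-((k : ℝ) + 1)) * shiftedJacobi (k + 1) a b =
      X * (1 - X) * (shiftedJacobi k (a + 1) (b + 1)).derivative +
        (C ((b : ℝ) + 1) - C ((a : ℝ) + b + 2) * X) * shiftedJacobi k (a + 1) (b + 1) := by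
  set Q := shiftedJacobi k (a + 1) (b + 1) with hQ
  have expand : X * (1 - X) * Q.derivative +
        (C ((b : ℝ) + 1) - C ((a : ℝ) + b + 2) * X) * Q =
      X * Q.derivative + C ((b : ℝ) + 1) * Q -
        X * (X * Q.derivative + C ((a : ℝ) + b + 2) * Q) := by
    ring
  rw [expand]
  ext q
  rcases q with _ | q
  · simpa [hQ, coeff_shiftedJacobi] using jacobiCoeff_succ_zero k a b
  · have step := jacobiCoeff_succ_succ k a b q
    rcases q with _ | q <;>
    · simp only [hQ, coeff_shiftedJacobi, Polynomial.coeff_derivative, Polynomial.coeff_add,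
        Polynomial.coeff_sub, Polynomial.coeff_C_mul, Polynomial.coeff_X_mul,
        Polynomial.mul_coeff_zero, Polynomial.coeff_X_zero, Polynomial.coeff_C_zero] at step ⊢
      push_cast at step ⊢
      linear_combination step

theorem hasDerivAt_jacobiWeight (a b : ℕ) (Q : ℝ[X]) (x : ℝ) :
    HasDerivAt (fun y => (1 - y) ^ (a + 1) * (1 + y) ^ (b + 1) * Q.eval ((1 + y) / 2))
      (2 * ((1 - x) ^ a * (1 + x) ^ b * (X * (1 - X) * Q.derivative +
        (C ((b : ℝ) + 1) - C ((a : ℝ) + b + 2) * X) * Q).eval ((1 + x) / 2))) x := by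
  have left := ((hasDerivAt_id x).const_sub 1).pow (a + 1)
  have right := ((hasDerivAt_id x).const_add 1).pow (b + 1)
  have poly := (Q.hasDerivAt ((1 + x) / 2)).comp x (((hasDerivAt_id x).const_add 1).div_const 2)
  refine ((left.mul right).mul poly).congr_deriv ?_
  simp only [id_eq, Nat.add_sub_cancel, Pi.pow_apply, Pi.mul_apply, Function.comp_apply,
    Polynomial.eval_add, Polynomial.eval_sub, Polynomial.eval_mul, Polynomial.eval_C,
    Polynomial.eval_X, Polynomial.eval_one]
  push_cast
  ring

theorem iteratedDeriv_jacobiWeight (k a b : ℕ) :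
    iteratedDeriv k (fun y : ℝ => (1 - y) ^ (a + k) * (1 + y) ^ (b + k)) =
      fun x => (-2) ^ k * k ! * ((1 - x) ^ a * (1 + x) ^ b *
        (shiftedJacobi k a b).eval ((1 + x) / 2)) := by
  induction k generalizing a b with
  | zero => ext x; simp [eval_shiftedJacobi, jacobiCoeff]
  | succ k ih =>
    have ih' := ih (a + 1) (b + 1)
    simp only [show a + 1 + k = a + (k + 1) by ring, show b + 1 + k = b + (k + 1) by ring] at ih'
    rw [iteratedDeriv_succ, ih']
    ext x
    rw [((hasDerivAt_jacobiWeight a b _ x).const_mul _).deriv, ← shiftedJacobi_succ,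
      Polynomial.eval_mul, Polynomial.eval_C, Nat.factorial_succ]
    push_cast
    ring

theorem IsJacobi.eq_eval_shiftedJacobi {J : ℕ → ℕ → ℕ → ℝ → ℝ} (hJ : IsJacobi J) (k a b : ℕ)
    (x : ℝ) : J k a b x = (shiftedJacobi k a b).eval ((1 + x) / 2) := by
  obtain ⟨⟨p, hp⟩, rodrigues⟩ := hJ k a b
  have agree : ∀ y ∈ Ioo (-1 : ℝ) 1, J k a b y =
      ((shiftedJacobi k a b).comp (C (1 / 2) * (1 + X))).eval y := by
    intro y hy
    have hsub : (1 - y) ≠ 0 := by linarith [hy.2]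
    have hadd : (1 + y) ≠ 0 := by linarith [hy.1]
    have sign : (-1 : ℝ) ^ k * (-2) ^ k = 2 ^ k := by rw [← mul_pow]; norm_num
    rw [rodrigues y hy, jacobiFormula, iteratedDeriv_jacobiWeight]
    simp only [Polynomial.eval_comp, Polynomial.eval_mul, Polynomial.eval_C, Polynomial.eval_add,
      Polynomial.eval_one, Polynomial.eval_X, zpow_neg, zpow_natCast]
    field_simp
    linear_combination (shiftedJacobi k a b).eval ((1 + y) / 2) * sign
  rw [eval_eq_of_eqOn_Ioo (by norm_num) hp agree]
  simp [div_eq_inv_mul]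

theorem IsJacobi.cos_two_mul_eq {J : ℕ → ℕ → ℕ → ℝ → ℝ} (hJ : IsJacobi J) (k a b : ℕ) (r : ℝ) :
    J k a b (cos (2 * r)) = (shiftedJacobi k a b).eval (cos r ^ 2) := by
  rw [hJ.eq_eval_shiftedJacobi, cos_two_mul]
  ring_nf

theorem abs_jacobiCoeff_le {k q : ℕ} (hq : q ≤ k) (a b : ℕ) :
    |jacobiCoeff k a b q| ≤ (2 * k + a + b : ℝ) ^ k := by
  have left : (k + b).choose (b + q) ≤ (2 * k + a + b) ^ (k - q) := by
    rw [Nat.choose_symm_of_eq_add (by lia : k + b = (b + q) + (k - q))]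
    exact (Nat.choose_le_pow _ _).trans (Nat.pow_le_pow_left (by lia) _)
  have right : (k + a + b + q).choose q ≤ (2 * k + a + b) ^ q :=
    (Nat.choose_le_pow _ _).trans (Nat.pow_le_pow_left (by lia) _)
  have bound : (k + b).choose (b + q) * (k + a + b + q).choose q ≤ (2 * k + a + b) ^ k :=
    (Nat.mul_le_mul left right).trans_eq (by rw [← pow_add, Nat.sub_add_cancel hq])
  rw [jacobiCoeff, mul_assoc, abs_mul, abs_neg_one_pow, one_mul, abs_of_nonneg (by positivity)]
  exact_mod_cast bound

theorem IsJacobi.abs_le {J : ℕ → ℕ → ℕ → ℝ → ℝ} (hJ : IsJacobi J) (k a b : ℕ) {x : ℝ}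
    (hx : x ∈ Icc (-1 : ℝ) 1) : |J k a b x| ≤ (k + 1) * (2 * k + a + b : ℝ) ^ k := by
  have hu : |(1 + x) / 2| ≤ 1 := _root_.abs_le.mpr ⟨by linarith [hx.1], by linarith [hx.2]⟩
  rw [hJ.eq_eval_shiftedJacobi, eval_shiftedJacobi]
  calc |∑ q ∈ range (k + 1), jacobiCoeff k a b q * ((1 + x) / 2) ^ q|
      ≤ ∑ q ∈ range (k + 1), |jacobiCoeff k a b q * ((1 + x) / 2) ^ q| :=
        Finset.abs_sum_le_sum_abs _ _
    _ ≤ ∑ _q ∈ range (k + 1), (2 * k + a + b : ℝ) ^ k := by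
        refine Finset.sum_le_sum fun q hq => ?_
        rw [abs_mul, abs_pow]
        exact mul_le_of_le_one_right (abs_nonneg _) (pow_le_one₀ (abs_nonneg _) hu) |>.trans
          (abs_jacobiCoeff_le (by simpa [Nat.lt_succ_iff] using hq) a b)
    _ = (k + 1) * (2 * k + a + b : ℝ) ^ k := by simp

/-! ### Gegenbauer polynomials of integer parameter -/

theorem chebyshevU_eq_sum_antidiagonal (R : Type*) [CommRing R] (j : ℕ) :
    U R j = ∑ p ∈ antidiagonal j,
      (-1) ^ p.1 * (p.2.choose p.1 : R[X]) * (2 * X) ^ (p.2 - p.1) := by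
  set T : ℕ × ℕ → R[X] := fun p =>
    (-1) ^ p.1 * (p.2.choose p.1 : R[X]) * (2 * X) ^ (p.2 - p.1) with hT
  have T_zero (b : ℕ) : T (0, b + 1) = 2 * X * T (0, b) := by simp [hT, pow_succ']
  have T_succ_zero (a : ℕ) : T (a + 1, 0) = 0 := by simp [hT]
  have T_succ_succ (a b : ℕ) : T (a + 1, b + 1) = 2 * X * T (a + 1, b) - T (a, b) := by
    rcases lt_or_ge a b with hab | hab
    · obtain ⟨d, rfl⟩ := Nat.exists_eq_add_of_lt hab
      simp only [hT, Nat.choose_succ_succ, show a + d + 1 + 1 - (a + 1) = d + 1 by lia,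
        show a + d + 1 - (a + 1) = d by lia, show a + d + 1 - a = d + 1 by lia]
      push_cast
      ring
    · simp [hT, Nat.choose_succ_succ, Nat.choose_eq_zero_of_lt (Nat.lt_succ_of_le hab),
        Nat.sub_eq_zero_of_le hab, pow_succ]
  clear_value T
  induction j using Nat.twoStepInduction with
  | zero => simp [hT]
  | one => simp [hT, Finset.Nat.antidiagonal_succ]
  | more j ih₀ ih₁ =>
    push_cast at ih₁ ⊢
    rw [Polynomial.Chebyshev.U_add_two, ih₀, ih₁, Finset.Nat.sum_antidiagonal_succ,
      Finset.Nat.sum_antidiagonal_succ', Finset.Nat.sum_antidiagonal_succ,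
      T_zero (j + 1), T_succ_zero]
    simp only [T_succ_succ, Finset.sum_sub_distrib, Finset.mul_sum, mul_add]
    ring

/-- The Gegenbauer polynomial `C_j^{(l+1)}` of integer parameter, as the normalised `l`-th
derivative of a Chebyshev polynomial of the second kind. -/
noncomputable def gegenbauer (l j : ℕ) : ℝ[X] :=
  C (2 ^ l * l ! : ℝ)⁻¹ * derivative^[l] (U ℝ (j + l : ℕ))

theorem gegenbauer_zero_left (j : ℕ) : gegenbauer 0 j = U ℝ j := by simp [gegenbauer]

theorem eval_iterate_derivative_two_mul_X_pow (l p : ℕ) (x : ℝ) :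
    (derivative^[l] ((2 * X : ℝ[X]) ^ p)).eval x =
      2 ^ l * l ! * (p.choose l * (2 * x) ^ (p - l)) := by
  rw [mul_pow, ← Polynomial.C_ofNat, ← Polynomial.C_pow, Polynomial.iterate_derivative_C_mul,
    Polynomial.iterate_derivative_X_pow_eq_smul, Nat.descFactorial_eq_factorial_mul_choose]
  rcases lt_or_ge p l with hpl | hpl
  · simp [Nat.choose_eq_zero_of_lt hpl]
  · obtain ⟨d, rfl⟩ := Nat.exists_eq_add_of_le hpl
    simp only [Polynomial.eval_smul, Polynomial.eval_mul, Polynomial.eval_pow, Polynomial.eval_C,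
      Polynomial.eval_X, Nat.add_sub_cancel_left, smul_eq_mul]
    push_cast
    ring

theorem eval_gegenbauer (l j : ℕ) (x : ℝ) :
    (gegenbauer l j).eval x = ∑ i ∈ range (j / 2 + 1),
      (-1) ^ i * ((j + l - i).choose i * (j + l - 2 * i).choose l) * (2 * x) ^ (j - 2 * i) := by
  have normalise (p : ℕ) : (2 ^ l * l ! : ℝ)⁻¹ * (derivative^[l] ((2 * X : ℝ[X]) ^ p)).eval x =
      p.choose l * (2 * x) ^ (p - l) := by
    rw [eval_iterate_derivative_two_mul_X_pow]
    field_simp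
  rw [gegenbauer, chebyshevU_eq_sum_antidiagonal, Finset.Nat.sum_antidiagonal_eq_sum_range_succ
    (fun i p => (-1 : ℝ[X]) ^ i * (p.choose i : ℝ[X]) * (2 * X) ^ (p - i))]
  have coeff_const (i p : ℕ) : (-1 : ℝ[X]) ^ i * (p.choose i : ℝ[X]) =
      C ((-1) ^ i * (p.choose i : ℝ)) := by simp
  simp only [coeff_const, Polynomial.iterate_derivative_sum, Polynomial.iterate_derivative_C_mul,
    Polynomial.eval_mul, Polynomial.eval_C, Polynomial.eval_finsetSum, Finset.mul_sum]
  rw [Finset.sum_subset (Finset.range_mono (by lia : j / 2 + 1 ≤ (j + l).succ))]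
  · refine Finset.sum_congr rfl fun i _ => ?_
    rw [mul_left_comm, normalise, show j + l - i - i = j + l - 2 * i by lia,
      show j + l - 2 * i - l = j - 2 * i by lia]
    ring
  · intro i _ hi
    have hij : j < 2 * i := by rw [Finset.mem_range] at hi; lia
    rcases lt_or_ge (j + l) (2 * i) with hi' | hi'
    · simp [Nat.choose_eq_zero_of_lt (by lia : j + l - i < i)]
    · simp [Nat.choose_eq_zero_of_lt (by lia : j + l - 2 * i < l)]

theorem gegenbauer_zero_right (l : ℕ) : gegenbauer l 0 = 1 := by
  refine Polynomial.funext fun x => ?_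
  simp [eval_gegenbauer]

/-- The gamma quotient relating `∂ⁱ (1 - x²)^(l+i+1/2)` to `(1 - x²)^(l+1/2) C_i^{(l+1)}(x)` in the
Rodrigues formula. -/
noncomputable def gegenbauerRodriguesConst (i l : ℕ) : ℝ :=
  (-2) ^ i * i ! * (Real.Gamma (2 * l + 2) * Real.Gamma (l + i + 3 / 2)) /
    (Real.Gamma (i + 2 * l + 2) * Real.Gamma (l + 3 / 2))

theorem gegenbauerRodriguesConst_zero (l : ℕ) : gegenbauerRodriguesConst 0 l = 1 := by
  have h₁ : Real.Gamma (2 * l + 2) ≠ 0 := (Real.Gamma_pos_of_pos (by positivity)).ne'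
  have h₂ : Real.Gamma (l + 3 / 2) ≠ 0 := (Real.Gamma_pos_of_pos (by positivity)).ne'
  simp [gegenbauerRodriguesConst, h₁, h₂]

theorem gegenbauerRodriguesConst_succ (i l : ℕ) :
    gegenbauerRodriguesConst (i + 1) l =
      -((i + 1) * (i + 2 * l + 3) / (2 * (l + 1))) * gegenbauerRodriguesConst i (l + 1) := by
  have h₁ : Real.Gamma (2 * l + 4) = (2 * l + 3) * ((2 * l + 2) * Real.Gamma (2 * l + 2)) := by
    rw [← Real.Gamma_add_one (by positivity), show (2 * l + 2 + 1 : ℝ) = 2 * l + 3 by ring,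
      ← Real.Gamma_add_one (by positivity)]
    ring_nf
  have h₂ : Real.Gamma (l + 5 / 2) = (l + 3 / 2) * Real.Gamma (l + 3 / 2) := by
    rw [← Real.Gamma_add_one (by positivity)]
    ring_nf
  have h₃ : Real.Gamma (i + 2 * l + 4) = (i + 2 * l + 3) * Real.Gamma (i + 2 * l + 3) := by
    rw [← Real.Gamma_add_one (by positivity)]
    ring_nf
  simp only [gegenbauerRodriguesConst, Nat.factorial_succ, Nat.cast_add, Nat.cast_mul, Nat.cast_one,
    show 2 * ((l : ℝ) + 1) + 2 = 2 * l + 4 by ring, show (l : ℝ) + 1 + 3 / 2 = l + 5 / 2 by ring,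
    show (i : ℝ) + 2 * (l + 1) + 2 = i + 2 * l + 4 by ring,
    show (i : ℝ) + 1 + 2 * l + 2 = i + 2 * l + 3 by ring,
    show (l : ℝ) + (i + 1) + 3 / 2 = l + 1 + i + 3 / 2 by ring, h₁, h₂, h₃]
  field_simp
  ring

theorem gegenbauer_derivative_eval (l i : ℕ) (x : ℝ) :
    (1 - x ^ 2) * (gegenbauer (l + 1) i).derivative.eval x -
        (2 * l + 3) * x * (gegenbauer (l + 1) i).eval x =
      -((i + 1) * (i + 2 * l + 3) / (2 * (l + 1))) * (gegenbauer l (i + 1)).eval x := by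
  have ode := Polynomial.Chebyshev.one_sub_X_sq_mul_iterate_derivative_U_eval
    (R := ℝ) ((i + 1 + l : ℕ) : ℤ) l x
  simp only [gegenbauer, Polynomial.derivative_C_mul, Polynomial.eval_mul, Polynomial.eval_C,
    ← Function.iterate_succ_apply' derivative, show i + (l + 1) = i + 1 + l by ring,
    Nat.factorial_succ, show (l + 1).succ = l + 2 from rfl]
  push_cast at ode ⊢
  field_simp
  linear_combination 2 * 2 ^ l * ode

theorem hasDerivAt_gegenbauerWeight (l i : ℕ) {x : ℝ} (hx : x ∈ Ioo (-1 : ℝ) 1) :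
    HasDerivAt (fun y => (1 - y ^ 2) ^ ((l + 1 : ℕ) + 1 / 2 : ℝ) * (gegenbauer (l + 1) i).eval y)
      (-((i + 1) * (i + 2 * l + 3) / (2 * (l + 1))) *
        ((1 - x ^ 2) ^ (l + 1 / 2 : ℝ) * (gegenbauer l (i + 1)).eval x)) x := by
  have hpos : 0 < 1 - x ^ 2 := by nlinarith [hx.1, hx.2]
  have base : HasDerivAt (fun y : ℝ => 1 - y ^ 2) (-(2 * x)) x := by
    simpa using ((hasDerivAt_id x).pow 2).const_sub 1
  have weight := base.rpow_const (p := (l + 1 : ℕ) + 1 / 2) (Or.inl hpos.ne')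
  refine (weight.mul ((gegenbauer (l + 1) i).hasDerivAt x)).congr_deriv ?_
  have split : (1 - x ^ 2) ^ ((l + 1 : ℕ) + 1 / 2 : ℝ) =
      (1 - x ^ 2) ^ (l + 1 / 2 : ℝ) * (1 - x ^ 2) := by
    rw [← Real.rpow_add_one hpos.ne']
    push_cast
    ring_nf
  rw [split, show ((l + 1 : ℕ) + 1 / 2 - 1 : ℝ) = l + 1 / 2 by push_cast; ring]
  push_cast
  linear_combination (1 - x ^ 2) ^ (l + 1 / 2 : ℝ) * gegenbauer_derivative_eval l i x

theorem iteratedDeriv_gegenbauerWeight (i l : ℕ) {x : ℝ} (hx : x ∈ Ioo (-1 : ℝ) 1) :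
    iteratedDeriv i (fun y : ℝ => (1 - y ^ 2) ^ (l + i + 1 / 2 : ℝ)) x =
      gegenbauerRodriguesConst i l * ((1 - x ^ 2) ^ (l + 1 / 2 : ℝ) * (gegenbauer l i).eval x) := by
  induction i generalizing l x with
  | zero => simp [gegenbauerRodriguesConst_zero, gegenbauer_zero_right]
  | succ i ih =>
    have near : iteratedDeriv i (fun y : ℝ => (1 - y ^ 2) ^ (l + (i + 1 : ℕ) + 1 / 2 : ℝ)) =ᶠ[𝓝 x]
        fun y => gegenbauerRodriguesConst i (l + 1) *
          ((1 - y ^ 2) ^ ((l + 1 : ℕ) + 1 / 2 : ℝ) * (gegenbauer (l + 1) i).eval y) := by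
      filter_upwards [isOpen_Ioo.mem_nhds hx] with y hy
      rw [← ih (l + 1) hy, show (l + (i + 1 : ℕ) + 1 / 2 : ℝ) = (l + 1 : ℕ) + i + 1 / 2 by
        push_cast; ring]
    rw [iteratedDeriv_succ, near.deriv_eq, ((hasDerivAt_gegenbauerWeight l i hx).const_mul _).deriv,
      gegenbauerRodriguesConst_succ]
    ring

theorem IsGegenbauer.eq_eval_gegenbauer {n : ℕ} {G : ℕ → ℝ → ℝ} (hG : IsGegenbauer n G) (j : ℕ)
    (x : ℝ) : G j x = (gegenbauer (2 * n) j).eval x := by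
  obtain ⟨⟨p, hp⟩, rodrigues⟩ := hG j
  refine eval_eq_of_eqOn_Ioo (show (-1 : ℝ) < 1 by norm_num) hp (fun y hy => ?_) x
  have hpos : 0 < 1 - y ^ 2 := by nlinarith [hy.1, hy.2]
  have weight := iteratedDeriv_gegenbauerWeight j (2 * n) hy
  have sign : (-1 : ℝ) ^ j * (-2) ^ j = 2 ^ j := by rw [← mul_pow]; norm_num
  simp only [gegenbauerRodriguesConst, Nat.cast_mul, Nat.cast_ofNat,
    show 2 * (2 * (n : ℝ)) = 4 * n by ring] at weight
  rw [rodrigues y hy, gegenbauerFormula, weight, Real.rpow_neg hpos.le, Real.Gamma_nat_eq_factorial]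
  field_simp
  linear_combination (gegenbauer (2 * n) j).eval y * sign

/-! ### The connection formula -/

/-- The ballot number `C(p, q) - C(p, q - 1)`, the multiplicity of `U_{p-2q}` in `(2X)^p`. -/
noncomputable def ballotNumber (p q : ℕ) : ℝ :=
  (p + 1 - 2 * q) / (p + 1) * (p + 1).choose q

theorem ballotNumber_zero_right (p : ℕ) : ballotNumber p 0 = 1 := by
  have : (p : ℝ) + 1 ≠ 0 := by positivity
  simp [ballotNumber, this]

theorem ballotNumber_succ_succ (p q : ℕ) :
    ballotNumber (p + 1) (q + 1) = ballotNumber p (q + 1) + ballotNumber p q := by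
  have absorb := cast_succ_mul_choose_succ (p + 1) q
  simp only [ballotNumber, Nat.choose_succ_succ (p + 1)]
  push_cast at absorb ⊢
  field_simp
  linear_combination 2 * absorb

theorem ballotNumber_two_mul_add_one_self (s : ℕ) : ballotNumber (2 * s + 1) (s + 1) = 0 := by
  have middle : ((2 * s + 1 : ℕ) + 1 - 2 * (s + 1 : ℕ) : ℝ) = 0 := by push_cast; ring
  rw [ballotNumber, middle, zero_div, zero_mul]

theorem two_mul_mul_eval_chebyshevU (k : ℤ) (x : ℝ) :
    2 * x * (U ℝ k).eval x = (U ℝ (k + 1)).eval x + (U ℝ (k - 1)).eval x := by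
  have recurrence := congrArg (Polynomial.eval x) (Polynomial.Chebyshev.U_add_one ℝ k)
  simp only [Polynomial.eval_sub, Polynomial.eval_mul, Polynomial.eval_ofNat,
    Polynomial.eval_X] at recurrence
  linear_combination -recurrence

theorem two_mul_pow_eq_sum_ballotNumber (p : ℕ) (x : ℝ) :
    (2 * x) ^ p = ∑ q ∈ range (p / 2 + 1), ballotNumber p q * (U ℝ ((p : ℤ) - 2 * q)).eval x := by
  induction p with
  | zero => simp [ballotNumber_zero_right]
  | succ p ih =>
    set N := p / 2 + 1 with hN
    set V : ℕ → ℝ := fun q => (U ℝ ((p + 1 : ℕ) - 2 * q : ℤ)).eval x with hV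
    have boundary : ballotNumber p N * V N = 0 ∧ (Even p → V N = 0) := by
      rcases Nat.even_or_odd' p with ⟨s, rfl | rfl⟩
      · have : V N = 0 := by
          simp [hV, hN, show (2 * s + 1 - 2 * (s + 1) : ℤ) = -1 by ring]
        simp [this]
      · have : ballotNumber (2 * s + 1) N = 0 := by
          rw [hN, show (2 * s + 1) / 2 = s by lia, ballotNumber_two_mul_add_one_self]
        simp [this]
    have expand : (2 * x) ^ (p + 1) = ∑ q ∈ range (N + 1), ballotNumber (p + 1) q * V q := by
      have step (q : ℕ) : 2 * x * (U ℝ ((p : ℤ) - 2 * q)).eval x = V q + V (q + 1) := by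
        rw [two_mul_mul_eval_chebyshevU]
        simp only [hV]
        push_cast
        ring_nf
      rw [Finset.sum_range_succ']
      simp only [ballotNumber_succ_succ, add_mul, Finset.sum_add_distrib]
      rw [pow_succ', ih, Finset.mul_sum]
      simp only [mul_left_comm (2 * x), step, mul_add, Finset.sum_add_distrib]
      have shift := Finset.sum_range_succ' (fun q => ballotNumber p q * V q) N
      rw [Finset.sum_range_succ, boundary.1] at shift
      simp only [ballotNumber_zero_right] at shift ⊢
      linear_combination shift
    rw [expand]
    rcases Nat.even_or_odd p with hp | hp
    · rw [Finset.sum_range_succ, boundary.2 hp, show (p + 1) / 2 + 1 = N by grind,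
        mul_zero, add_zero]
    · rw [show (p + 1) / 2 + 1 = N + 1 by grind]

theorem connection_coeff (a m d q : ℕ) :
    ((m + d + 2 * q + a + 1).choose d * (m + 2 * q + a + 1).choose (a + 1) : ℝ) *
        ballotNumber (m + 2 * q) q =
      (m + 1) / (a + 1) * (d + q + m + a + 1).choose a *
        ((d + q + (m + 1)).choose (m + 1 + q) * (d + q + a + (m + 1) + q).choose q) := by
  have choose_eq (u v w : ℕ) (h : w = u + v) : (w.choose u : ℝ) = w ! / (u ! * v !) := by
    rw [h, Nat.cast_add_choose]
  have hm : (m : ℝ) + 2 * q + 1 ≠ 0 := by positivity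
  rw [ballotNumber, choose_eq d (m + 2 * q + a + 1) _ (by ring),
    choose_eq (a + 1) (m + 2 * q) _ (by ring), choose_eq q (m + q + 1) _ (by ring),
    choose_eq a (d + q + m + 1) _ (by ring),
    choose_eq (m + 1 + q) d _ (by ring), choose_eq q (d + q + a + (m + 1)) _ (by ring)]
  simp only [show m + 1 + q = m + q + 1 by ring, show d + q + (m + 1) = d + q + m + 1 by ring,
    show d + q + a + (m + 1) = d + q + m + a + 1 by ring,
    show d + q + m + a + 1 + q = m + d + 2 * q + a + 1 by ring,
    Nat.factorial_succ a, Nat.factorial_succ (m + 2 * q)]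
  push_cast
  field_simp
  ring

theorem sum_connection_coeff (a k m : ℕ) (s : ℝ) :
    ∑ i ∈ range (k + 1), (-1) ^ i * ((m + 2 * k + (a + 1) - i).choose i *
        (m + 2 * k + (a + 1) - 2 * i).choose (a + 1) : ℝ) * s ^ (m + 2 * k - 2 * i) *
          ballotNumber (m + 2 * k - 2 * i) (k - i) =
      (m + 1) / (a + 1) * (k + m + a + 1).choose a * (shiftedJacobi k a (m + 1)).eval (s ^ 2) *
        s ^ m := by
  rw [eval_shiftedJacobi, ← Finset.sum_range_reflect, Finset.mul_sum, Finset.sum_mul]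
  refine Finset.sum_congr rfl fun q hq => ?_
  obtain ⟨d, rfl⟩ := Nat.exists_eq_add_of_le' (Nat.lt_succ_iff.mp (Finset.mem_range.mp hq))
  have coeff := connection_coeff a m d q
  have sign : (-1 : ℝ) ^ (d + q + q) = (-1) ^ d := by rw [add_assoc, pow_add, ← two_mul]; simp
  simp only [jacobiCoeff, sign, show d + q + 1 - 1 - q = d by lia,
    show m + 2 * (d + q) + (a + 1) - d = m + d + 2 * q + a + 1 by lia,
    show m + 2 * (d + q) + (a + 1) - 2 * d = m + 2 * q + a + 1 by lia,
    show m + 2 * (d + q) - 2 * d = m + 2 * q by lia, show d + q - d = q by lia]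
  rw [pow_add, pow_mul]
  linear_combination (-1) ^ d * s ^ m * (s ^ 2) ^ q * coeff

theorem eval_gegenbauer_mul (a j : ℕ) (s x : ℝ) :
    (gegenbauer (a + 1) j).eval (s * x) = ∑ k ∈ range (j / 2 + 1),
      ((j - 2 * k : ℕ) + 1) / (a + 1) * (k + (j - 2 * k) + a + 1).choose a *
        (shiftedJacobi k a (j - 2 * k + 1)).eval (s ^ 2) * s ^ (j - 2 * k) *
          (U ℝ (j - 2 * k : ℕ)).eval x := by
  set w : ℕ → ℝ := fun i => (-1) ^ i * ((j + (a + 1) - i).choose i *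
    (j + (a + 1) - 2 * i).choose (a + 1) : ℝ) * s ^ (j - 2 * i) with hw
  set f : ℕ → ℕ → ℝ := fun i q => w i * ballotNumber (j - 2 * i) q *
    (U ℝ ((j : ℤ) - 2 * (i + q : ℕ))).eval x with hf
  have expand : (gegenbauer (a + 1) j).eval (s * x) =
      ∑ i ∈ range (j / 2 + 1), ∑ q ∈ range (j / 2 + 1 - i), f i q := by
    rw [eval_gegenbauer]
    refine Finset.sum_congr rfl fun i hi => ?_
    have hij : 2 * i ≤ j := by rw [Finset.mem_range] at hi; lia
    rw [mul_left_comm 2 s x, mul_pow, two_mul_pow_eq_sum_ballotNumber, ← mul_assoc, Finset.mul_sum,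
      show (j - 2 * i) / 2 + 1 = j / 2 + 1 - i by lia]
    refine Finset.sum_congr rfl fun q _ => ?_
    simp only [hf, hw, Nat.cast_sub hij]
    push_cast
    ring_nf
  rw [expand, ← Finset.sum_range_diag_flip]
  refine Finset.sum_congr rfl fun k hk => ?_
  obtain ⟨m, rfl⟩ : ∃ m, j = m + 2 * k := ⟨j - 2 * k, by rw [Finset.mem_range] at hk; lia⟩
  simp only [Nat.add_sub_cancel]
  rw [← sum_connection_coeff, Finset.sum_mul]
  refine Finset.sum_congr rfl fun i hi => ?_
  have hik : i + (k - i) = k := by rw [Finset.mem_range] at hi; lia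
  simp only [hf, hw, hik, show ((m + 2 * k : ℕ) - 2 * k : ℤ) = m by push_cast; ring]

/-! ### Averages of Chebyshev polynomials -/

theorem vertFactor_eq_eval_chebyshevU (m : ℕ) {η : ℝ} (hη : sin η ≠ 0) :
    vertFactor m η = (U ℝ m).eval (cos η) := by
  have hη₀ : η ≠ 0 := by rintro rfl; simp at hη
  rw [vertFactor, if_neg hη₀, div_eq_iff hη, Polynomial.Chebyshev.U_real_cos]
  push_cast
  rfl

theorem abs_eval_chebyshevU_mul_sqrt_le_one (m : ℕ) {x : ℝ} (hx : |x| ≤ 1) :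
    |(U ℝ m).eval x| * √(1 - x ^ 2) ≤ 1 := by
  obtain ⟨hx₁, hx₂⟩ := abs_le.mp hx
  have key := Polynomial.Chebyshev.U_real_cos (arccos x) m
  rw [cos_arccos hx₁ hx₂, sin_arccos] at key
  rw [← abs_of_nonneg (sqrt_nonneg (1 - x ^ 2)), ← abs_mul, key]
  exact abs_sin_le_one _

theorem integral_comp_cos_eq_zero_of_odd {f : ℝ → ℝ} (hf : ∀ x, f (-x) = -f x) :
    ∫ θ in (0 : ℝ)..π, f (cos θ) = 0 := by
  have reflect := intervalIntegral.integral_comp_sub_left (a := 0) (b := π) (fun θ => f (cos θ)) π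
  simp only [cos_pi_sub, hf, intervalIntegral.integral_neg, sub_self, sub_zero] at reflect
  linarith

theorem integral_two_mul_cos_pow_two_mul (q : ℕ) :
    ∫ θ in (0 : ℝ)..π, (2 * cos θ) ^ (2 * q) = π * q.centralBinom := by
  induction q with
  | zero => simp
  | succ q ih =>
    have central : ((q : ℝ) + 1) * (q + 1).centralBinom = 2 * (2 * q + 1) * q.centralBinom := by
      exact_mod_cast Nat.succ_mul_centralBinom_succ q
    simp only [mul_pow, intervalIntegral.integral_const_mul, mul_add_one] at ih ⊢
    rw [integral_cos_pow, pow_add]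
    simp only [sin_pi, sin_zero, mul_zero, sub_zero, zero_div, zero_add]
    push_cast
    field_simp
    linear_combination 2 * (2 * q + 1) * ih - π * central

theorem integral_eval_chebyshevU_odd (l : ℕ) (c : ℝ) :
    ∫ θ in (0 : ℝ)..π, (U ℝ (2 * l + 1 : ℕ)).eval (c * cos θ) = 0 := by
  refine integral_comp_cos_eq_zero_of_odd (f := fun x => (U ℝ (2 * l + 1 : ℕ)).eval (c * x))
    fun x => ?_
  rw [mul_neg, Polynomial.Chebyshev.U_eval_neg]
  simp [Int.negOnePow_odd _ (odd_two_mul_add_one (l : ℤ))]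

theorem choose_mul_centralBinom (d q : ℕ) :
    ((d + 2 * q).choose d * q.centralBinom : ℝ) = (d + q).choose q * (d + q + q).choose q := by
  rw [Nat.centralBinom, Nat.cast_add_choose, two_mul, Nat.cast_add_choose, add_comm (d + q) q,
    Nat.cast_add_choose, add_comm d q, Nat.cast_add_choose, show q + (q + d) = d + (q + q) by ring]
  field_simp

theorem integral_eval_chebyshevU_even (l : ℕ) (c : ℝ) :
    ∫ θ in (0 : ℝ)..π, (U ℝ (2 * l : ℕ)).eval (c * cos θ) =
      π * (shiftedJacobi l 0 0).eval (c ^ 2) := by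
  simp only [← gegenbauer_zero_left, eval_gegenbauer, mul_left_comm 2 c, mul_pow c]
  rw [intervalIntegral.integral_finsetSum fun i _ =>
    Continuous.intervalIntegrable (by fun_prop) _ _]
  simp only [intervalIntegral.integral_const_mul]
  rw [Nat.mul_div_cancel_left l two_pos, eval_shiftedJacobi, ← Finset.sum_range_reflect,
    Finset.mul_sum]
  refine Finset.sum_congr rfl fun q hq => ?_
  obtain ⟨d, rfl⟩ := Nat.exists_eq_add_of_le' (Nat.lt_succ_iff.mp (Finset.mem_range.mp hq))
  have sign : (-1 : ℝ) ^ (d + q + q) = (-1) ^ d := by rw [add_assoc, pow_add, ← two_mul]; simp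
  simp only [jacobiCoeff, sign, show d + q + 1 - 1 - q = d by lia,
    show 2 * (d + q) - d = d + 2 * q by lia, show 2 * (d + q) - 2 * d = 2 * q by lia,
    Nat.choose_zero_right, integral_two_mul_cos_pow_two_mul, add_zero, zero_add, Nat.cast_one]
  rw [pow_mul]
  linear_combination (-1) ^ d * (c ^ 2) ^ q * π * choose_mul_centralBinom d q

end Polynomials

/-! ### Gaussian integrals -/

section Gaussian

variable {t : ℝ}

theorem integrable_cexp_mul_sub_sq (ht : 0 < t) (z : ℂ) :
    Integrable fun y : ℝ => Complex.exp (z * y - y ^ 2 / (4 * t)) := by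
  have hre : 0 < ((1 / (4 * t) : ℝ) : ℂ).re := by rw [Complex.ofReal_re]; positivity
  refine (integrable_cexp_quadratic hre z 0).congr (Eventually.of_forall fun y => ?_)
  simp only
  congr 1
  push_cast
  ring

theorem integral_cexp_mul_sub_sq (ht : 0 < t) (z : ℂ) :
    ∫ y : ℝ, Complex.exp (z * y - y ^ 2 / (4 * t)) = √(4 * π * t) * Complex.exp (t * z ^ 2) := by
  have hre : (-(1 / (4 * t) : ℝ) : ℂ).re < 0 := by
    rw [Complex.neg_re, Complex.ofReal_re, neg_lt_zero]; positivity
  have quadratic := integral_cexp_quadratic hre z 0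
  have prefactor : (π / -(-(1 / (4 * t) : ℝ) : ℂ)) ^ (1 / 2 : ℂ) = √(4 * π * t) := by
    rw [neg_neg, ← Complex.ofReal_div, Real.sqrt_eq_rpow, Complex.ofReal_cpow (by positivity)]
    congr 2
    · field_simp
    · push_cast; rfl
  rw [prefactor] at quadratic
  convert quadratic using 2
  · ext y
    push_cast
    ring_nf
  · have : (t : ℂ) ≠ 0 := by exact_mod_cast ht.ne'
    push_cast
    field_simp
    ring_nf

theorem im_cexp_ofReal_add_ofReal_mul_I (a b : ℝ) :
    (Complex.exp (a + b * Complex.I)).im = exp a * sin b := by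
  simp [Complex.exp_im]

theorem im_cexp_mul_sub_sq (a b y : ℝ) :
    (Complex.exp ((a + b * Complex.I) * y - y ^ 2 / (4 * t))).im =
      exp (a * y - y ^ 2 / (4 * t)) * sin (b * y) := by
  have split : ((a + b * Complex.I) * y - y ^ 2 / (4 * t) : ℂ) =
      (a * y - y ^ 2 / (4 * t) : ℝ) + (b * y : ℝ) * Complex.I := by push_cast; ring
  rw [split, im_cexp_ofReal_add_ofReal_mul_I]

theorem integrable_exp_mul_sub_sq (ht : 0 < t) (a : ℝ) :
    Integrable fun y : ℝ => exp (a * y - y ^ 2 / (4 * t)) := by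
  refine (integrable_cexp_mul_sub_sq ht a).re.congr (Eventually.of_forall fun y => ?_)
  have real : (a * y - y ^ 2 / (4 * t) : ℂ) = (a * y - y ^ 2 / (4 * t) : ℝ) := by push_cast; rfl
  simp only [RCLike.re_to_complex, real, Complex.exp_ofReal_re]

theorem integral_exp_mul_sub_sq (ht : 0 < t) (a : ℝ) :
    ∫ y : ℝ, exp (a * y - y ^ 2 / (4 * t)) = √(4 * π * t) * exp (t * a ^ 2) := by
  have h := integral_cexp_mul_sub_sq ht a
  norm_cast at h

theorem integrable_exp_mul_sub_sq_mul_sin (ht : 0 < t) (a b : ℝ) :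
    Integrable fun y : ℝ => exp (a * y - y ^ 2 / (4 * t)) * sin (b * y) := by
  simpa only [im_cexp_mul_sub_sq, RCLike.im_to_complex] using
    (integrable_cexp_mul_sub_sq ht (a + b * Complex.I)).im

theorem integral_exp_mul_sub_sq_mul_sin (ht : 0 < t) (a b : ℝ) :
    ∫ y : ℝ, exp (a * y - y ^ 2 / (4 * t)) * sin (b * y) =
      √(4 * π * t) * (exp (t * (a ^ 2 - b ^ 2)) * sin (2 * a * b * t)) := by
  have im_integral := integral_im (integrable_cexp_mul_sub_sq ht (a + b * Complex.I))
  have square : (t * (a + b * Complex.I) ^ 2 : ℂ) =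
      (t * (a ^ 2 - b ^ 2) : ℝ) + (2 * a * b * t : ℝ) * Complex.I := by
    push_cast
    linear_combination (t * b ^ 2 : ℂ) * Complex.I_sq
  simp only [RCLike.im_to_complex, im_cexp_mul_sub_sq] at im_integral
  rw [im_integral, integral_cexp_mul_sub_sq ht, square, Complex.im_ofReal_mul,
    im_cexp_ofReal_add_ofReal_mul_I]

theorem sqrt_four_mul_pi_mul : √(4 * π * t) = 2 * √(π * t) := by
  rw [show 4 * π * t = 2 ^ 2 * (π * t) by ring, sqrt_mul (by positivity), sqrt_sq (by positivity)]

theorem integral_Ioi_sinh_mul_sin_mul_exp_neg_sq (ht : 0 < t) (a b : ℝ) :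
    ∫ y in Ioi (0 : ℝ), sinh (a * y) * sin (b * y) * exp (-y ^ 2 / (4 * t)) =
      √(π * t) * (exp (t * (a ^ 2 - b ^ 2)) * sin (2 * a * b * t)) := by
  have symmetrise (y : ℝ) : sinh (a * |y|) * sin (b * |y|) * exp (-|y| ^ 2 / (4 * t)) =
      1 / 2 * (exp (a * y - y ^ 2 / (4 * t)) * sin (b * y) -
        exp (-a * y - y ^ 2 / (4 * t)) * sin (b * y)) := by
    have even : sinh (a * |y|) * sin (b * |y|) = sinh (a * y) * sin (b * y) := by
      rcases abs_choice y with h | h <;> simp [h]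
    rw [even, sq_abs, sinh_eq, sub_eq_add_neg (a * y), sub_eq_add_neg (-a * y), exp_add, exp_add,
      neg_div, neg_mul]
    ring
  have double := integral_comp_abs
    (f := fun y => sinh (a * y) * sin (b * y) * exp (-y ^ 2 / (4 * t)))
  simp only [symmetrise] at double
  rw [integral_const_mul, integral_sub (integrable_exp_mul_sub_sq_mul_sin ht a b)
    (integrable_exp_mul_sub_sq_mul_sin ht (-a) b), integral_exp_mul_sub_sq_mul_sin ht,
    integral_exp_mul_sub_sq_mul_sin ht, sqrt_four_mul_pi_mul, neg_sq,
    show 2 * -a * b * t = -(2 * a * b * t) by ring, sin_neg] at double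
  linarith

theorem sinh_le_exp (x : ℝ) : sinh x ≤ exp x := by
  rw [← cosh_add_sinh]
  exact le_add_of_nonneg_left (cosh_pos x).le

theorem norm_sinh_mul_sin_mul_exp_neg_sq_le {a y : ℝ} (ha : 0 ≤ a) (hy : 0 ≤ y) (b : ℝ) :
    ‖sinh (a * y) * sin (b * y) * exp (-y ^ 2 / (4 * t))‖ ≤ exp (a * y - y ^ 2 / (4 * t)) := by
  rw [norm_mul, norm_mul, norm_of_nonneg (sinh_nonneg_iff.mpr (by positivity)),
    norm_of_nonneg (exp_pos _).le, sub_eq_add_neg, exp_add, neg_div]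
  gcongr
  exact (mul_le_of_le_one_right (sinh_nonneg_iff.mpr (by positivity)) (abs_sin_le_one _)).trans
    (sinh_le_exp _)

theorem integrableOn_sinh_mul_sin_mul_exp_neg_sq (ht : 0 < t) {a : ℝ} (ha : 0 ≤ a) (b : ℝ) :
    IntegrableOn (fun y => sinh (a * y) * sin (b * y) * exp (-y ^ 2 / (4 * t))) (Ioi 0) := by
  refine (integrable_exp_mul_sub_sq ht a).integrableOn.mono'
    (Continuous.aestronglyMeasurable (by fun_prop)) ?_
  filter_upwards [ae_restrict_mem measurableSet_Ioi] with y hy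
  exact norm_sinh_mul_sin_mul_exp_neg_sq_le ha (mem_Ioi.mp hy).le b

theorem integral_Ioi_norm_sinh_mul_sin_mul_exp_neg_sq_le (ht : 0 < t) {a : ℝ} (ha : 0 ≤ a)
    (b : ℝ) : ∫ y in Ioi (0 : ℝ), ‖sinh (a * y) * sin (b * y) * exp (-y ^ 2 / (4 * t))‖ ≤
      √(4 * π * t) * exp (t * a ^ 2) := by
  rw [← integral_exp_mul_sub_sq ht]
  refine le_trans ?_ (setIntegral_le_integral (s := Ioi 0) (integrable_exp_mul_sub_sq ht a)
    (Eventually.of_forall fun y => (exp_pos _).le))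
  refine setIntegral_mono_on (integrableOn_sinh_mul_sin_mul_exp_neg_sq ht ha b).norm
    (integrable_exp_mul_sub_sq ht a).integrableOn measurableSet_Ioi fun y hy => ?_
  exact norm_sinh_mul_sin_mul_exp_neg_sq_le ha (mem_Ioi.mp hy).le b

end Gaussian

/-! ### Summability of the radial terms -/

theorem summable_add_one_pow_mul_exp_neg_mul (p : ℕ) {c : ℝ} (hc : 0 < c) :
    Summable fun m : ℕ => ((m : ℝ) + 1) ^ p * exp (-(c * m)) := by
  have shifted := ((summable_nat_add_iff 1).mpr (summable_pow_mul_exp_neg_nat_mul p hc)).mul_left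
    (exp c)
  refine shifted.congr fun m => ?_
  rw [mul_left_comm, ← exp_add]
  push_cast
  ring_nf

theorem summable_add_one_pow_mul_pow_mul_exp_neg_mul_sq (p : ℕ) {s t : ℝ} (hs : 0 ≤ s)
    (ht : 0 < t) : Summable fun k : ℕ => ((k : ℝ) + 1) ^ p * (s ^ k * exp (-(t * k ^ 2))) := by
  have decay : Tendsto (fun k : ℕ => s * exp (-(t * k))) atTop (𝓝 0) := by
    simpa only [mul_zero, Function.comp_def] using ((tendsto_exp_neg_atTop_nhds_zero.comp
      (tendsto_natCast_atTop_atTop.const_mul_atTop ht)).const_mul s)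
  refine (summable_add_one_pow_mul_exp_neg_mul p one_pos).of_norm_bounded_eventually_nat ?_
  filter_upwards [decay.eventually (ge_mem_nhds (exp_pos (-1)))] with k hk
  rw [norm_of_nonneg (by positivity)]
  gcongr
  calc s ^ k * exp (-(t * k ^ 2)) = (s * exp (-(t * k))) ^ k := by
        rw [mul_pow, ← exp_nat_mul]; ring_nf
    _ ≤ exp (-1) ^ k := by gcongr
    _ = exp (-(1 * k)) := by rw [← exp_nat_mul]; ring_nf

theorem mul_exp_neg_mul_le {t : ℝ} (ht : 0 < t) (x : ℝ) : x * exp (-(x * t)) ≤ 1 / t := by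
  rw [exp_neg, ← div_eq_mul_inv, div_le_div_iff₀ (exp_pos _) ht, one_mul]
  linarith [add_one_le_exp (x * t)]

/-- The part of the general term `pTerm` of the subelliptic heat kernel on `S^{4n+3}` that does
not depend on the vertical variable: `pTerm` without its factor `vertFactor`. -/
noncomputable def radialTerm (n : ℕ) (J : ℕ → ℕ → ℕ → ℝ → ℝ) (t r : ℝ) (mk : ℕ × ℕ) : ℝ :=
  (Gamma (2 * n) / (2 * π ^ (2 * n + 2))) *
    (2 * (mk.2 : ℝ) + mk.1 + 2 * n + 1) * ((mk.1 : ℝ) + 1) *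
    (Nat.choose (mk.2 + mk.1 + 2 * n) (2 * n - 1) : ℝ) *
    exp (-(4 * ((mk.2 : ℝ) * (mk.2 + 2 * n + mk.1 + 1) + n * mk.1)) * t) *
    cos r ^ mk.1 * J mk.2 (2 * n - 1) (mk.1 + 1) (cos (2 * r))

section Radial

variable {n : ℕ} {J : ℕ → ℕ → ℕ → ℝ → ℝ} {t : ℝ}

theorem pTerm_eq_radialTerm_mul (r η : ℝ) (mk : ℕ × ℕ) :
    pTerm n J t r η mk = radialTerm n J t r mk * vertFactor mk.1 η := by
  unfold pTerm radialTerm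
  ring

theorem exp_radial_le (ht : 0 < t) (n m k : ℕ) :
    exp (-(4 * ((k : ℝ) * (k + 2 * n + m + 1) + n * m)) * t) ≤
      exp (-((2 * k + m + 2 * n + 1) * t)) ^ k * exp (-(t * k ^ 2)) * exp (-(4 * n * t * m)) := by
  rw [← exp_nat_mul, ← exp_add, ← exp_add, exp_le_exp]
  have : 0 ≤ k * t * (k + 3 * m + 6 * n + 3) := by positivity
  linarith

theorem abs_coeff_mul_jacobi_le (hn : 1 ≤ n) (hJ : IsJacobi J) (m k : ℕ) {x : ℝ}
    (hx : x ∈ Icc (-1) 1) :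
    (2 * k + m + 2 * n + 1) * (k + m + 2 * n).choose (2 * n - 1) * |J k (2 * n - 1) (m + 1) x| ≤
      (k + 1) * ((2 * n + 1) * (m + 1) * (k + 1)) ^ (2 * n) * (2 * k + m + 2 * n + 1 : ℝ) ^ k := by
  set Y : ℝ := 2 * k + m + 2 * n + 1
  have hn' : (1 : ℝ) ≤ n := by exact_mod_cast hn
  have choose_le : ((k + m + 2 * n).choose (2 * n - 1) : ℝ) ≤ Y ^ (2 * n - 1) := by
    refine (Nat.cast_le.mpr (Nat.choose_le_pow _ _)).trans ?_
    push_cast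
    gcongr
    linarith
  have jacobi_le : |J k (2 * n - 1) (m + 1) x| ≤ (k + 1) * Y ^ k := by
    refine (hJ.abs_le k _ _ hx).trans ?_
    rw [Nat.cast_pred (by lia)]
    push_cast
    gcongr <;> linarith
  have Y_le : Y ≤ (2 * n + 1) * (m + 1) * (k + 1) := by
    have : (0 : ℝ) ≤ k * (2 * n - 1) := mul_nonneg (by positivity) (by linarith)
    have : (0 : ℝ) ≤ 2 * n * m + 2 * n * m * k + m * k := by positivity
    linarith
  calc Y * (k + m + 2 * n).choose (2 * n - 1) * |J k (2 * n - 1) (m + 1) x|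
      ≤ Y * Y ^ (2 * n - 1) * ((k + 1) * Y ^ k) := by gcongr
    _ = (k + 1) * Y ^ (2 * n) * Y ^ k := by
        rw [← pow_succ', Nat.sub_add_cancel (by lia)]; ring
    _ ≤ _ := by gcongr

theorem abs_radialTerm_le (hn : 1 ≤ n) (hJ : IsJacobi J) (ht : 0 < t) (r : ℝ) (m k : ℕ) :
    |radialTerm n J t r (m, k)| ≤
      Gamma (2 * n) / (2 * π ^ (2 * n + 2)) * (2 * n + 1) ^ (2 * n) *
        (((m + 1) ^ (2 * n + 1) * exp (-(4 * n * t * m))) *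
          ((k + 1) ^ (2 * n + 1) * ((1 / t) ^ k * exp (-(t * k ^ 2))))) := by
  have coeff_le := abs_coeff_mul_jacobi_le hn hJ m k (cos_mem_Icc (2 * r))
  set Y : ℝ := 2 * k + m + 2 * n + 1
  have hY : 0 ≤ Y := by positivity
  have cos_pow_le : |cos r| ^ m ≤ 1 := pow_le_one₀ (abs_nonneg _) (abs_cos_le_one r)
  have absorb : (Y * exp (-(Y * t))) ^ k ≤ (1 / t) ^ k :=
    pow_le_pow_left₀ (by positivity) (mul_exp_neg_mul_le ht Y) k
  set c := Gamma (2 * n) / (2 * π ^ (2 * n + 2))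
  calc |radialTerm n J t r (m, k)|
      = c * (m + 1) * (Y * (k + m + 2 * n).choose (2 * n - 1) *
          |J k (2 * n - 1) (m + 1) (cos (2 * r))|) *
          exp (-(4 * ((k : ℝ) * (k + 2 * n + m + 1) + n * m)) * t) * |cos r| ^ m := by
        simp only [radialTerm, abs_mul, abs_pow, abs_exp]
        rw [abs_of_nonneg (by positivity : 0 ≤ c), abs_of_nonneg hY, Nat.abs_cast,
          abs_of_nonneg (by positivity : 0 ≤ (m : ℝ) + 1)]
        ring
    _ ≤ c * (m + 1) * ((k + 1) * ((2 * n + 1) * (m + 1) * (k + 1)) ^ (2 * n) * Y ^ k) *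
          (exp (-(Y * t)) ^ k * exp (-(t * k ^ 2)) * exp (-(4 * n * t * m))) * 1 := by
        gcongr
        exact exp_radial_le ht n m k
    _ = c * (m + 1) * ((k + 1) * ((2 * n + 1) * (m + 1) * (k + 1)) ^ (2 * n)) *
          (Y * exp (-(Y * t))) ^ k * (exp (-(t * k ^ 2)) * exp (-(4 * n * t * m))) := by
        rw [mul_pow Y]; ring
    _ ≤ c * (m + 1) * ((k + 1) * ((2 * n + 1) * (m + 1) * (k + 1)) ^ (2 * n)) *
          (1 / t) ^ k * (exp (-(t * k ^ 2)) * exp (-(4 * n * t * m))) := by gcongr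
    _ = _ := by simp only [mul_pow]; ring

theorem summable_abs_radialTerm (hn : 1 ≤ n) (hJ : IsJacobi J) (ht : 0 < t) (r : ℝ) :
    Summable fun mk => |radialTerm n J t r mk| := by
  have sum_m := summable_add_one_pow_mul_exp_neg_mul (2 * n + 1) (c := 4 * n * t) (by positivity)
  have sum_k := summable_add_one_pow_mul_pow_mul_exp_neg_mul_sq (2 * n + 1)
    (one_div_pos.mpr ht).le ht
  exact .of_nonneg_of_le (fun _ => abs_nonneg _) (fun mk => abs_radialTerm_le hn hJ ht r mk.1 mk.2)
    ((sum_m.mul_of_nonneg sum_k (fun _ => by positivity) fun _ => by positivity).mul_left _)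

end Radial

/-! ### Integral representations of the heat kernels -/

section Kernels

open Finset (range)
open Polynomial.Chebyshev (U)

theorem preimage_two_mul_add_singleton (j : ℕ) :
    (fun mk : ℕ × ℕ => 2 * mk.2 + mk.1) ⁻¹' {j} =
      ((range (j / 2 + 1)).image fun k => (j - 2 * k, k) : Finset (ℕ × ℕ)) := by
  ext ⟨m, k⟩
  simp only [mem_preimage, mem_singleton_iff, Finset.coe_image, mem_image, Finset.coe_range,
    mem_Iio, Prod.mk.injEq]
  constructor
  · intro h
    exact ⟨k, by lia, by lia, rfl⟩
  · rintro ⟨k', h₁, h₂, rfl⟩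
    lia

theorem hasSum_sum_range_half {E : Type*} [AddCommGroup E] [UniformSpace E] [IsUniformAddGroup E]
    [CompleteSpace E] [T2Space E] {f : ℕ × ℕ → E} {a : E} (hf : HasSum f a) :
    HasSum (fun j => ∑ k ∈ range (j / 2 + 1), f (j - 2 * k, k)) a := by
  refine (hf.tsum_fiberwise fun mk => 2 * mk.2 + mk.1).congr_fun ?_
  intro j
  rw [preimage_two_mul_add_singleton, Finset.tsum_subtype',
    Finset.sum_image fun k _ k' _ h => congrArg Prod.snd h]

theorem exp_neg_mul_abs_sinh_le {t : ℝ} (ht : 0 < t) (m : ℕ) (y : ℝ) :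
    exp (-(m * (m + 2)) * t) * |sinh ((m + 1) * y)| ≤ exp (t + y ^ 2 / (4 * t)) := by
  have square : 0 ≤ (2 * t * (m + 1) - |y|) ^ 2 / (4 * t) := by positivity
  have expand : (2 * t * (m + 1) - |y|) ^ 2 / (4 * t) =
      t * (m + 1) ^ 2 - (m + 1) * |y| + y ^ 2 / (4 * t) := by
    rw [← sq_abs y]
    field_simp
    ring
  have hm : |((m : ℝ) + 1) * y| = (m + 1) * |y| := by
    rw [abs_mul, abs_of_nonneg (by positivity)]
  rw [abs_sinh, hm]
  calc exp (-(m * (m + 2)) * t) * sinh ((m + 1) * |y|)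
      ≤ exp (-(m * (m + 2)) * t) * exp ((m + 1) * |y|) := by gcongr; exact sinh_le_exp _
    _ = exp (-(m * (m + 2)) * t + (m + 1) * |y|) := (exp_add _ _).symm
    _ ≤ exp (t + y ^ 2 / (4 * t)) := exp_le_exp.mpr (by linarith)

variable {n : ℕ} {J : ℕ → ℕ → ℕ → ℝ → ℝ} {G : ℕ → ℝ → ℝ} {t : ℝ}

theorem sinh_mul_gegenbauer_eq_sum_radialTerm (hn : 1 ≤ n) (hJ : IsJacobi J)
    (hG : IsGegenbauer n G) (r y : ℝ) (j : ℕ) :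
    sinh y * (Gamma (2 * n + 1) / (2 * π ^ (2 * n + 2)) *
      ((j + 2 * n + 1) * exp (-(j * (j + 4 * n + 2)) * t) * G j (cos r * cosh y))) =
    ∑ k ∈ range (j / 2 + 1), radialTerm n J t r (j - 2 * k, k) *
      (exp (-((j - 2 * k : ℕ) * ((j - 2 * k : ℕ) + 2)) * t) *
        sinh (((j - 2 * k : ℕ) + 1) * y)) := by
  obtain ⟨a, ha⟩ : ∃ a, 2 * n = a + 1 := ⟨2 * n - 1, by lia⟩
  have ha' : (2 * n : ℝ) = a + 1 := by exact_mod_cast ha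
  have hΓ : Gamma (2 * n + 1) = 2 * n * Gamma (2 * n) := Gamma_add_one (by positivity)
  rw [hG.eq_eval_gegenbauer, ha, eval_gegenbauer_mul, Finset.mul_sum, Finset.mul_sum,
    Finset.mul_sum]
  refine Finset.sum_congr rfl fun k hk => ?_
  obtain ⟨m, rfl⟩ : ∃ m, j = m + 2 * k :=
    ⟨j - 2 * k, by rw [Finset.mem_range] at hk; lia⟩
  have exponents : exp (-((m + 2 * k : ℕ) * ((m + 2 * k : ℕ) + 4 * n + 2)) * t) =
      exp (-(4 * ((k : ℝ) * (k + 2 * n + m + 1) + n * m)) * t) * exp (-(m * (m + 2)) * t) := by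
    rw [← exp_add]; push_cast; ring_nf
  have chebyshev := Polynomial.Chebyshev.U_real_cosh y m
  rw [Int.cast_natCast] at chebyshev
  simp only [Nat.add_sub_cancel, radialTerm]
  rw [exponents, hΓ, hJ.cos_two_mul_eq, ← chebyshev, ha, Nat.add_sub_cancel,
    ha', ← add_assoc]
  push_cast
  field_simp
  ring_nf

theorem hasSum_radialTerm_mul_sinh (hn : 1 ≤ n) (hJ : IsJacobi J) (hG : IsGegenbauer n G)
    (ht : 0 < t) (r y : ℝ) :
    HasSum (fun mk : ℕ × ℕ => radialTerm n J t r mk *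
        (exp (-(mk.1 * (mk.1 + 2)) * t) * sinh ((mk.1 + 1) * y)))
      (sinh y * qKernel n G t (cos r * cosh y)) := by
  have summable : Summable fun mk : ℕ × ℕ => radialTerm n J t r mk *
      (exp (-(mk.1 * (mk.1 + 2)) * t) * sinh ((mk.1 + 1) * y)) := by
    refine .of_norm_bounded ((summable_abs_radialTerm hn hJ ht r).mul_right
      (exp (t + y ^ 2 / (4 * t)))) fun mk => ?_
    rw [norm_eq_abs, abs_mul, abs_mul (exp _), abs_exp]
    gcongr
    exact exp_neg_mul_abs_sinh_le ht mk.1 y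
  convert summable.hasSum
  rw [← (hasSum_sum_range_half summable.hasSum).tsum_eq, qKernel, ← tsum_mul_left, ← tsum_mul_left]
  exact tsum_congr (sinh_mul_gegenbauer_eq_sum_radialTerm hn hJ hG r y)

theorem exp_neg_mul_exp_mul_add_one_sq_sub (m : ℕ) (c : ℝ) :
    exp (-(m * (m + 2)) * t) * exp (t * ((m + 1) ^ 2 - c)) = exp (t * (1 - c)) := by
  rw [← exp_add]
  ring_nf

theorem integral_norm_radialTerm_mul_le (ht : 0 < t) (r b : ℝ) (mk : ℕ × ℕ) :
    ∫ y in Ioi (0 : ℝ), ‖radialTerm n J t r mk * exp (-(mk.1 * (mk.1 + 2)) * t) *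
        (sinh ((mk.1 + 1) * y) * sin (b * y) * exp (-y ^ 2 / (4 * t)))‖ ≤
      |radialTerm n J t r mk| * (√(4 * π * t) * exp t) := by
  have exponents := exp_neg_mul_exp_mul_add_one_sq_sub (t := t) mk.1 0
  rw [sub_zero, sub_zero, mul_one] at exponents
  have gaussian_le := integral_Ioi_norm_sinh_mul_sin_mul_exp_neg_sq_le ht
    (by positivity : (0 : ℝ) ≤ mk.1 + 1) b
  simp only [norm_mul (radialTerm n J t r mk * _), integral_const_mul]
  calc _ ≤ ‖radialTerm n J t r mk * exp (-(mk.1 * (mk.1 + 2)) * t)‖ *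
        (√(4 * π * t) * exp (t * (mk.1 + 1) ^ 2)) := by gcongr
    _ = |radialTerm n J t r mk| * (√(4 * π * t) * exp t) := by
        rw [norm_mul, norm_eq_abs, norm_eq_abs, abs_exp, ← exponents]
        ring

theorem hasSum_integral_sinh_mul_sin_mul_qKernel (hn : 1 ≤ n) (hJ : IsJacobi J)
    (hG : IsGegenbauer n G) (ht : 0 < t) (r b : ℝ) :
    HasSum (fun mk : ℕ × ℕ => radialTerm n J t r mk *
        (√(π * t) * (exp (t * (1 - b ^ 2)) * sin (2 * (mk.1 + 1) * b * t))))
      (∫ y in Ioi (0 : ℝ), sinh y * sin (b * y) * exp (-y ^ 2 / (4 * t)) *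
        qKernel n G t (cos r * cosh y)) := by
  set F : ℕ × ℕ → ℝ → ℝ := fun mk y =>
    radialTerm n J t r mk * exp (-(mk.1 * (mk.1 + 2)) * t) *
      (sinh ((mk.1 + 1) * y) * sin (b * y) * exp (-y ^ 2 / (4 * t))) with hF
  have integrable (mk : ℕ × ℕ) : IntegrableOn (F mk) (Ioi 0) :=
    (integrableOn_sinh_mul_sin_mul_exp_neg_sq ht (by positivity) b).const_mul _
  have summable : Summable fun mk => ∫ y in Ioi (0 : ℝ), ‖F mk y‖ :=
    .of_nonneg_of_le (fun mk => by positivity) (integral_norm_radialTerm_mul_le ht r b)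
      ((summable_abs_radialTerm hn hJ ht r).mul_right _)
  have term_integral (mk : ℕ × ℕ) : ∫ y in Ioi (0 : ℝ), F mk y = radialTerm n J t r mk *
      (√(π * t) * (exp (t * (1 - b ^ 2)) * sin (2 * (mk.1 + 1) * b * t))) := by
    rw [hF, integral_const_mul, integral_Ioi_sinh_mul_sin_mul_exp_neg_sq ht,
      ← exp_neg_mul_exp_mul_add_one_sq_sub mk.1]
    ring
  have tsum_integrand (y : ℝ) : ∑' mk, F mk y =
      sinh y * sin (b * y) * exp (-y ^ 2 / (4 * t)) * qKernel n G t (cos r * cosh y) := by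
    have expansion := (hasSum_radialTerm_mul_sinh hn hJ hG ht r y).mul_right
      (sin (b * y) * exp (-y ^ 2 / (4 * t)))
    calc ∑' mk, F mk y = _ := tsum_congr fun mk => by rw [hF]; ring
      _ = _ := expansion.tsum_eq
      _ = _ := by ring
  simpa only [term_integral, tsum_integrand] using
    hasSum_integral_of_summable_integral_norm integrable summable

theorem pKernel_eq_integral_qKernel (hn : 1 ≤ n) (hJ : IsJacobi J) (hG : IsGegenbauer n G)
    (ht : 0 < t) (r : ℝ) {η : ℝ} (hη : sin η ≠ 0) :
    pKernel n J t r η = exp (-t) / √(π * t) * ∫ y in Ioi (0 : ℝ),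
      (sinh y * sin (y * η / (2 * t)) / sin η) * exp (-(y ^ 2 - η ^ 2) / (4 * t)) *
        qKernel n G t (cos r * cosh y) := by
  have hη₀ : η ≠ 0 := by rintro rfl; exact hη sin_zero
  have pull_out (y : ℝ) :
      (sinh y * sin (y * η / (2 * t)) / sin η) * exp (-(y ^ 2 - η ^ 2) / (4 * t)) *
        qKernel n G t (cos r * cosh y) =
      exp (η ^ 2 / (4 * t)) / sin η * (sinh y * sin (η / (2 * t) * y) * exp (-y ^ 2 / (4 * t)) *
        qKernel n G t (cos r * cosh y)) := by
    rw [show -(y ^ 2 - η ^ 2) / (4 * t) = η ^ 2 / (4 * t) + -y ^ 2 / (4 * t) by ring, exp_add,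
      show y * η / (2 * t) = η / (2 * t) * y by ring]
    ring
  have exponents : exp (-t) * exp (η ^ 2 / (4 * t)) * exp (t * (1 - (η / (2 * t)) ^ 2)) = 1 := by
    rw [← exp_add, ← exp_add, exp_eq_one_iff]
    field_simp
    ring
  have hπt : √(π * t) ≠ 0 := by positivity
  simp only [pull_out, integral_const_mul]
  rw [← (hasSum_integral_sinh_mul_sin_mul_qKernel hn hJ hG ht r (η / (2 * t))).tsum_eq, pKernel,
    ← tsum_mul_left, ← tsum_mul_left]
  refine tsum_congr fun mk => ?_
  rw [pTerm_eq_radialTerm_mul, vertFactor, if_neg hη₀,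
    show 2 * ((mk.1 : ℝ) + 1) * (η / (2 * t)) * t = (mk.1 + 1) * η by field_simp]
  calc radialTerm n J t r mk * (sin ((mk.1 + 1) * η) / sin η)
      = exp (-t) * exp (η ^ 2 / (4 * t)) * exp (t * (1 - (η / (2 * t)) ^ 2)) *
          (√(π * t) / √(π * t)) * (radialTerm n J t r mk * (sin ((mk.1 + 1) * η) / sin η)) := by
        rw [exponents, div_self hπt, one_mul, one_mul]
    _ = _ := by ring

theorem hTerm_eq_radialTerm_mul (r φ : ℝ) (l k : ℕ) :
    hTerm n J t r φ (l, k) = radialTerm n J t r (2 * l, k) * (1 / 2 * J l 0 0 (cos (2 * φ))) := by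
  simp only [hTerm, radialTerm]
  push_cast
  ring_nf

theorem abs_cos_mul_cos_le_one (φ θ : ℝ) : |cos φ * cos θ| ≤ 1 := by
  rw [abs_mul]
  exact mul_le_one₀ (abs_cos_le_one φ) (abs_nonneg _) (abs_cos_le_one θ)

theorem sin_arccos_cos_mul_cos (φ θ : ℝ) :
    sin (arccos (cos φ * cos θ)) = √(1 - cos φ ^ 2 * cos θ ^ 2) := by
  rw [sin_arccos, mul_pow]

theorem abs_sin_le_sqrt_one_sub_cos_mul_cos_sq (φ θ : ℝ) :
    |sin φ| ≤ √(1 - (cos φ * cos θ) ^ 2) := by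
  refine abs_le_sqrt ?_
  rw [sin_sq, mul_pow]
  linarith [mul_le_of_le_one_right (sq_nonneg (cos φ)) (cos_sq_le_one θ)]

theorem abs_eval_chebyshevU_cos_mul_cos_le (m : ℕ) {φ : ℝ} (hφ : sin φ ≠ 0) (θ : ℝ) :
    |(U ℝ m).eval (cos φ * cos θ)| ≤ |sin φ|⁻¹ := by
  rw [← one_div, le_div_iff₀ (abs_pos.mpr hφ)]
  refine le_trans ?_ (abs_eval_chebyshevU_mul_sqrt_le_one m (abs_cos_mul_cos_le_one φ θ))
  gcongr
  exact abs_sin_le_sqrt_one_sub_cos_mul_cos_sq φ θ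

theorem sin_arccos_cos_mul_cos_ne_zero {φ : ℝ} (hφ : sin φ ≠ 0) (θ : ℝ) :
    sin (arccos (cos φ * cos θ)) ≠ 0 := by
  rw [sin_arccos]
  exact ((abs_pos.mpr hφ).trans_le (abs_sin_le_sqrt_one_sub_cos_mul_cos_sq φ θ)).ne'

theorem pKernel_arccos_cos_mul_cos (r : ℝ) {φ : ℝ} (hφ : sin φ ≠ 0) (θ : ℝ) :
    pKernel n J t r (arccos (cos φ * cos θ)) =
      ∑' mk : ℕ × ℕ, radialTerm n J t r mk * (U ℝ mk.1).eval (cos φ * cos θ) := by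
  obtain ⟨h₁, h₂⟩ := abs_le.mp (abs_cos_mul_cos_le_one φ θ)
  refine tsum_congr fun mk => ?_
  rw [pTerm_eq_radialTerm_mul, vertFactor_eq_eval_chebyshevU _
    (sin_arccos_cos_mul_cos_ne_zero hφ θ), cos_arccos h₁ h₂]

theorem hasSum_integral_pKernel_arccos (hn : 1 ≤ n) (hJ : IsJacobi J) (ht : 0 < t) (r : ℝ) {φ : ℝ}
    (hφ : sin φ ≠ 0) :
    HasSum (fun mk : ℕ × ℕ =>
        radialTerm n J t r mk * ∫ θ in (0 : ℝ)..π, (U ℝ mk.1).eval (cos φ * cos θ))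
      (∫ θ in (0 : ℝ)..π, pKernel n J t r (arccos (cos φ * cos θ))) := by
  have bound_summable := (summable_abs_radialTerm hn hJ ht r).mul_right |sin φ|⁻¹
  have term_le (mk : ℕ × ℕ) (θ : ℝ) :
      ‖radialTerm n J t r mk * (U ℝ mk.1).eval (cos φ * cos θ)‖ ≤
        |radialTerm n J t r mk| * |sin φ|⁻¹ := by
    rw [norm_mul, norm_eq_abs, norm_eq_abs]
    gcongr
    exact abs_eval_chebyshevU_cos_mul_cos_le mk.1 hφ θ
  simp only [← intervalIntegral.integral_const_mul, pKernel_arccos_cos_mul_cos r hφ]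
  exact intervalIntegral.hasSum_integral_of_dominated_convergence _
    (fun mk => Continuous.aestronglyMeasurable (by fun_prop))
    (fun mk => Eventually.of_forall fun θ _ => term_le mk θ)
    (Eventually.of_forall fun _ _ => bound_summable) intervalIntegrable_const
    (Eventually.of_forall fun θ _ => (Summable.of_norm_bounded bound_summable (term_le · θ)).hasSum)

theorem hKernel_eq_integral_pKernel (hn : 1 ≤ n) (hJ : IsJacobi J) (ht : 0 < t) (r : ℝ) {φ : ℝ}
    (hφ : sin φ ≠ 0) :
    hKernel n J t r φ =
      1 / (2 * π) * ∫ θ in (0 : ℝ)..π, pKernel n J t r (arccos (cos φ * cos θ)) := by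
  have double_injective : Function.Injective fun lk : ℕ × ℕ => (2 * lk.1, lk.2) := by
    rintro ⟨l, k⟩ ⟨l', k'⟩ h
    simp only [Prod.mk.injEq] at h ⊢
    lia
  have odd_vanish : ∀ mk ∉ Set.range (fun lk : ℕ × ℕ => (2 * lk.1, lk.2)),
      radialTerm n J t r mk * ∫ θ in (0 : ℝ)..π, (U ℝ mk.1).eval (cos φ * cos θ) = 0 := by
    rintro ⟨m, k⟩ hm
    obtain ⟨l, rfl | rfl⟩ := Nat.even_or_odd' m
    · exact absurd ⟨(l, k), rfl⟩ hm
    · rw [integral_eval_chebyshevU_odd, mul_zero]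
  rw [← ((double_injective.hasSum_iff odd_vanish).mpr
    (hasSum_integral_pKernel_arccos hn hJ ht r hφ)).tsum_eq, hKernel, ← tsum_mul_left]
  refine tsum_congr fun lk => ?_
  rw [hTerm_eq_radialTerm_mul, Function.comp_apply, integral_eval_chebyshevU_even,
    hJ.cos_two_mul_eq]
  field_simp

theorem stmt_16_general (hn : 1 ≤ n) (hJ : IsJacobi J) (hG : IsGegenbauer n G) (ht : 0 < t)
    (r : ℝ) {φ : ℝ} (hφ : sin φ ≠ 0) :
    hKernel n J t r φ = exp (-t) / (2 * π * √(π * t)) *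
      ∫ θ in (0 : ℝ)..π, ∫ y in Ioi (0 : ℝ),
        (sinh y * sin (y * arccos (cos φ * cos θ) / (2 * t)) / √(1 - cos φ ^ 2 * cos θ ^ 2)) *
          exp (-(y ^ 2 - arccos (cos φ * cos θ) ^ 2) / (4 * t)) *
          qKernel n G t (cos r * cosh y) := by
  have fibre (θ : ℝ) := pKernel_eq_integral_qKernel hn hJ hG ht r
    (sin_arccos_cos_mul_cos_ne_zero hφ θ)
  simp only [sin_arccos_cos_mul_cos] at fibre
  rw [hKernel_eq_integral_pKernel hn hJ ht r hφ]
  simp only [fibre, intervalIntegral.integral_const_mul]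
  rw [← mul_assoc, div_mul_div_comm, one_mul]

end Kernels

/-- integral representation of the subelliptic heat kernel on `CP^{2n+1}` in
terms of the Riemannian heat kernel of `S^{4n+3}`. -/
theorem stmt_16 (n : ℕ) (hn : 1 ≤ n) (J : ℕ → ℕ → ℕ → ℝ → ℝ) (hJ : IsJacobi J)
    (C : ℕ → ℝ → ℝ) (hC : IsGegenbauer n C)
    (t r φ : ℝ) (ht : 0 < t) (hr : r ∈ Set.Ico 0 (π / 2)) (hφ : φ ∈ Set.Ioc 0 (π / 2)) :
    hKernel n J t r φ =
      (Real.exp (-t) / (2 * π * Real.sqrt (π * t))) *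
        ∫ θ in (0:ℝ)..π, ∫ y in Set.Ioi (0 : ℝ),
          (Real.sinh y *
              Real.sin (y * Real.arccos (Real.cos φ * Real.cos θ) / (2 * t)) /
              Real.sqrt (1 - Real.cos φ ^ 2 * Real.cos θ ^ 2)) *
            Real.exp (-(y ^ 2 - Real.arccos (Real.cos φ * Real.cos θ) ^ 2) / (4 * t)) *
            qKernel n C t (Real.cos r * Real.cosh y) :=
  stmt_16_general hn hJ hC ht r (sin_pos_of_pos_of_lt_pi hφ.1 (by linarith [hφ.2, pi_pos])).ne'
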